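/- Let T be a standard tableau of shifted shape λ with N boxes, and for each k let b_k denote the box of T containing the entry k. Then for every 1 ≤ k ≤ N−2, if res(b_k) = res(b_{k+2}), then res(b_k) = res(b_{k+2}) = 1 and res(b_{k+1}) = 2. -/

import Mathlib

/-!
STATEMENT 19: In a standard tableau of shifted shape, if the entries k and k+2 occupy
boxes of equal residue, then this common residue is 1 and the box of k+1 has residue 2.
-/

/-- The shifted Young diagram of a strict partition `l = (λ₁ > λ₂ > ⋯)`. -/
def shiftedDiagram (l : List ℕ) : Set (ℕ × ℕ) :=
  {b | b.1 - 1 < l.length ∧ 1 ≤ b.1 ∧ b.1 ≤ b.2 ∧ b.2 + 1 ≤ l.getD (b.1 - 1) 0 + b.1}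

/-- The residue `res(i,j) = j - i + 1` of a box. -/
def resBox (b : ℕ × ℕ) : ℕ := b.2 + 1 - b.1

/-- `f : Fin N → ℕ × ℕ` is a standard tableau of shifted shape `l` (entry `k+1` in box `f k`). -/
def IsStandardTableau (l : List ℕ) (N : ℕ) (f : Fin N → ℕ × ℕ) : Prop :=
  Function.Injective f ∧ Set.range f = shiftedDiagram l ∧
    (∀ a b : Fin N, (f a).1 = (f b).1 → (f a).2 < (f b).2 → a < b) ∧
    (∀ a b : Fin N, (f a).2 = (f b).2 → (f a).1 < (f b).1 → a < b)

/-!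
Boxes of equal residue lie on one diagonal, so if `k` and `k + 2` occupy such boxes then `b_k` lies
strictly north-west of `b_{k+2}`. A shifted shape, even a skew one, is convex, so it contains every
box on or above the main diagonal in the rectangle spanned by the two, and each such box other than
these corners can only contain `k + 1`. The right neighbour of `b_k` is such a box, and so is its
lower neighbour unless `b_k` is on the main diagonal. Hence `b_k` is on the main diagonal and
`k + 1` sits immediately to its right.
-/

/-- A standard tableau of skew shifted shape with entries in `ι`, given by the map `f` sending each
entry to its box. The shape is not a separate parameter: it is the range of `f`, required to be
convex among the boxes weakly above the main diagonal for the product order on `ℕ × ℕ`. -/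
structure IsShiftedSkewTableau {ι : Type*} [LT ι] (f : ι → ℕ × ℕ) : Prop where
  injective : Function.Injective f
  fst_le_snd (a : ι) : (f a).1 ≤ (f a).2
  mem_range_of_le_of_le {a b : ι} {p : ℕ × ℕ} (hp : p.1 ≤ p.2) (hap : f a ≤ p) (hpb : p ≤ f b) :
    p ∈ Set.range f
  lt_of_row {a b : ι} (hrow : (f a).1 = (f b).1) (hcol : (f a).2 < (f b).2) : a < b
  lt_of_col {a b : ι} (hcol : (f a).2 = (f b).2) (hrow : (f a).1 < (f b).1) : a < b

theorem resBox_eq_resBox_iff {p q : ℕ × ℕ} (hp : p.1 ≤ p.2) (hq : q.1 ≤ q.2) :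
    resBox p = resBox q ↔ p.2 + q.1 = q.2 + p.1 := by
  unfold resBox
  omega

namespace IsShiftedSkewTableau

section Preorder

variable {ι : Type*} [Preorder ι] {f : ι → ℕ × ℕ}

theorem le_of_apply_le (hf : IsShiftedSkewTableau f) {a b : ι} (hab : f a ≤ f b) : a ≤ b := by
  obtain ⟨hrow, hcol⟩ := Prod.le_def.1 hab
  obtain ⟨c, hc⟩ : ((f a).1, (f b).2) ∈ Set.range f :=
    hf.mem_range_of_le_of_le ((hf.fst_le_snd a).trans hcol) ⟨le_rfl, hcol⟩ ⟨hrow, le_rfl⟩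
  obtain ⟨hc_row, hc_col⟩ := Prod.ext_iff.1 hc
  have hac : a ≤ c := by
    rcases hcol.eq_or_lt with h | h
    · exact (hf.injective (Prod.ext hc_row.symm (h.trans hc_col.symm))).le
    · exact (hf.lt_of_row hc_row.symm (h.trans_eq hc_col.symm)).le
  have hcb : c ≤ b := by
    rcases hrow.eq_or_lt with h | h
    · exact (hf.injective (Prod.ext (hc_row.trans h) hc_col)).le
    · exact (hf.lt_of_col hc_col (hc_row.trans_lt h)).le
  exact hac.trans hcb

theorem fst_lt_and_snd_lt_of_resBox_eq (hf : IsShiftedSkewTableau f) {a c : ι}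
    (hac : a < c) (heq : resBox (f a) = resBox (f c)) : (f a).1 < (f c).1 ∧ (f a).2 < (f c).2 := by
  have hdiag := (resBox_eq_resBox_iff (hf.fst_le_snd a) (hf.fst_le_snd c)).1 heq
  have hrow : (f a).1 < (f c).1 := by
    by_contra! hle
    exact hac.not_ge (hf.le_of_apply_le ⟨hle, by omega⟩)
  exact ⟨hrow, by omega⟩

end Preorder

theorem apply_eq_of_covBy_of_covBy {ι : Type*} [LinearOrder ι] {f : ι → ℕ × ℕ}
    (hf : IsShiftedSkewTableau f) {a b c : ι} (hab : a ⋖ b) (hbc : b ⋖ c)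
    {p : ℕ × ℕ} (hp : p.1 ≤ p.2) (hap : f a < p) (hpc : p < f c) : f b = p := by
  obtain ⟨x, rfl⟩ := hf.mem_range_of_le_of_le hp hap.le hpc.le
  have hax : a < x := (hf.le_of_apply_le hap.le).lt_of_ne (ne_of_apply_ne f hap.ne)
  have hxc : x < c := (hf.le_of_apply_le hpc.le).lt_of_ne (ne_of_apply_ne f hpc.ne)
  exact congrArg f (le_antisymm (hab.ge_of_gt hax) (hbc.le_of_lt hxc))

end IsShiftedSkewTableau

theorem residue_pattern_of_eq_two_apart_general {ι : Type*} [LinearOrder ι] {f : ι → ℕ × ℕ}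
    (hf : IsShiftedSkewTableau f) {a b c : ι} (hab : a ⋖ b) (hbc : b ⋖ c)
    (heq : resBox (f a) = resBox (f c)) :
    resBox (f a) = 1 ∧ resBox (f c) = 1 ∧ resBox (f b) = 2 := by
  obtain ⟨hrow, hcol⟩ := hf.fst_lt_and_snd_lt_of_resBox_eq (hab.lt.trans hbc.lt) heq
  have ha := hf.fst_le_snd a
  have hright : f b = ((f a).1, (f a).2 + 1) :=
    hf.apply_eq_of_covBy_of_covBy hab hbc (Nat.le_succ_of_le ha)
      (Prod.lt_iff.2 (.inr ⟨le_rfl, Nat.lt_succ_self _⟩)) (Prod.lt_iff.2 (.inl ⟨hrow, hcol⟩))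
  have hdiag : (f a).1 = (f a).2 := by
    by_contra hne
    have hbelow : f b = ((f a).1 + 1, (f a).2) :=
      hf.apply_eq_of_covBy_of_covBy hab hbc (ha.lt_of_ne hne)
        (Prod.lt_iff.2 (.inl ⟨Nat.lt_succ_self _, le_rfl⟩)) (Prod.lt_iff.2 (.inr ⟨hrow, hcol⟩))
    exact Nat.succ_ne_self _ (congrArg Prod.fst (hbelow.symm.trans hright))
  have hres_a : resBox (f a) = 1 := by
    unfold resBox
    omega
  have hres_b : resBox (f b) = 2 := by
    rw [hright, resBox, hdiag]
    omega
  exact ⟨hres_a, heq ▸ hres_a, hres_b⟩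

theorem getD_add_le_getD_add_of_isChain_gt {l : List ℕ} (hdec : l.IsChain (· > ·)) {i j : ℕ}
    (hij : i ≤ j) (hj : j < l.length) : l.getD j 0 + j ≤ l.getD i 0 + i := by
  induction j, hij using Nat.le_induction with
  | base => exact le_rfl
  | succ j _ ih =>
    have hstep : l[j + 1] < l[j] := List.isChain_iff_getElem.1 hdec j hj
    rw [← List.getD_eq_getElem l 0, ← List.getD_eq_getElem l 0] at hstep
    have hij := ih (by omega)
    omega

theorem mem_shiftedDiagram_of_le {l : List ℕ} (hdec : l.IsChain (· > ·)) {p q : ℕ × ℕ}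
    (hq : q ∈ shiftedDiagram l) (hp_pos : 1 ≤ p.1) (hp : p.1 ≤ p.2) (hpq : p ≤ q) :
    p ∈ shiftedDiagram l := by
  obtain ⟨hrow, hcol⟩ := Prod.le_def.1 hpq
  obtain ⟨hq_len, -, -, hq_end⟩ := hq
  have hrow_end := getD_add_le_getD_add_of_isChain_gt hdec (Nat.sub_le_sub_right hrow 1) hq_len
  exact ⟨by omega, hp_pos, hp, by omega⟩

theorem IsStandardTableau.isShiftedSkewTableau {l : List ℕ} (hdec : l.IsChain (· > ·)) {N : ℕ}
    {f : Fin N → ℕ × ℕ} (hf : IsStandardTableau l N f) : IsShiftedSkewTableau f := by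
  obtain ⟨hinj, hrange, hrow, hcol⟩ := hf
  have hmem (a : Fin N) : f a ∈ shiftedDiagram l := hrange ▸ Set.mem_range_self a
  exact
    { injective := hinj
      fst_le_snd := fun a => (hmem a).2.2.1
      mem_range_of_le_of_le := fun {a b _} hp hap hpb =>
        hrange ▸ mem_shiftedDiagram_of_le hdec (hmem b) ((hmem a).2.1.trans hap.1) hp hpb
      lt_of_row := hrow _ _
      lt_of_col := hcol _ _ }

theorem residue_pattern_of_eq_two_apart
    (l : List ℕ) (hdec : l.Chain' (· > ·)) (hpos : ∀ x ∈ l, 0 < x)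
    (N : ℕ) (f : Fin N → ℕ × ℕ) (hf : IsStandardTableau l N f)
    (kk : ℕ) (hk : kk + 2 < N)
    (heq : resBox (f ⟨kk, by omega⟩) = resBox (f ⟨kk + 2, hk⟩)) :
    resBox (f ⟨kk, by omega⟩) = 1 ∧ resBox (f ⟨kk + 2, hk⟩) = 1 ∧
      resBox (f ⟨kk + 1, by omega⟩) = 2 := by
  exact residue_pattern_of_eq_two_apart_general (hf.isShiftedSkewTableau hdec)
    (Fin.covBy_iff.2 (Order.covBy_add_one kk)) (Fin.covBy_iff.2 (Order.covBy_add_one (kk + 1))) heq
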